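/- Let q = 3^n for a positive integer n, let F_q be the field with q elements, and let a, b ∈ F_q be such that −a is not a square in F_q. Then the Weierstrass curve E : y² = x³ + a·x + b over F_q is nonsingular and the number of its F_q-rational points (affine points together with the point at infinity) equals q + 1. -/

import Mathlib

/-!
In characteristic `3` the map `x ↦ x ^ 3 + a * x` is additive, and its kernel consists of `0` and
the square roots of `-a`. As `-a` is not a square, the map is injective, hence bijective on the
finite field `F`. So for each `y` there is exactly one `x` with `y ^ 2 = x ^ 3 + a * x + b`, and the
`y`-coordinate identifies the affine points with `F`; the point at infinity accounts for the
extra `1`. Nonsingularity holds since `Δ = -a ^ 3` in characteristic `3`, and `a ≠ 0`.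
-/

theorem cube_add_mul_bijective {F : Type*} [Field F] [Finite F] [CharP F 3] {a : F}
    (ha : ¬ IsSquare (-a)) : Function.Bijective fun x : F => x ^ 3 + a * x := by
  refine Function.Injective.bijective_of_finite fun x y hxy => ?_
  have h3 : (3 : F) = 0 := by exact_mod_cast CharP.cast_eq_zero F 3
  have h : (x - y) * ((x - y) ^ 2 + a) = 0 := by
    linear_combination hxy - x * y * (x - y) * h3
  rcases mul_eq_zero.mp h with h | h
  · exact sub_eq_zero.mp h
  · exact absurd ⟨x - y, by linear_combination -h⟩ ha

theorem stmt_17 (n : ℕ) (hpos : 0 < n) (q : ℕ) (hq : q = 3 ^ n)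
    (F : Type*) [Field F] [Fintype F] (hF : Fintype.card F = q)
    (a b : F) (ha : ¬ IsSquare (-a))
    (E : WeierstrassCurve F) (hE : E = ⟨0, 0, 0, a, b⟩) :
    E.Δ ≠ 0 ∧ Nat.card E.toAffine.Point = q + 1 := by
  have h3 : (3 : F) = 0 := by
    have h := FiniteField.cast_card_eq_zero F
    rw [hF, hq] at h
    push_cast at h
    exact pow_eq_zero_iff hpos.ne' |>.mp h
  have : CharP F 3 :=
    (CharP.charP_iff_prime_eq_zero Nat.prime_three).mpr (by exact_mod_cast h3)
  have ha0 : a ≠ 0 := by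
    rintro rfl
    exact ha (by simp)
  have hbij := cube_add_mul_bijective ha
  subst hE
  refine ⟨?_, ?_⟩
  · have hΔ : (⟨0, 0, 0, a, b⟩ : WeierstrassCurve F).Δ = -a ^ 3 := by
      simp only [WeierstrassCurve.Δ, WeierstrassCurve.b₂, WeierstrassCurve.b₄,
        WeierstrassCurve.b₆, WeierstrassCurve.b₈]
      linear_combination (-21 * a ^ 3 - 144 * b ^ 2) * h3
    rw [hΔ]
    exact neg_ne_zero.mpr (pow_ne_zero 3 ha0)
  · set E : WeierstrassCurve F := ⟨0, 0, 0, a, b⟩ with hE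
    have hEq (x y : F) : E.toAffine.Equation x y ↔ y ^ 2 = x ^ 3 + a * x + b := by
      simp [WeierstrassCurve.Affine.equation_iff, hE]
    -- The partial derivative in `x` of the curve equation is `±(3 * x ^ 2 + a) = ±a`.
    have hNs (x y : F) (h : y ^ 2 = x ^ 3 + a * x + b) : E.toAffine.Nonsingular x y := by
      rw [WeierstrassCurve.Affine.nonsingular_iff]
      refine ⟨(hEq x y).mpr h, Or.inl ?_⟩
      simpa [hE, h3] using ha0.symm
    let f : E.toAffine.Point → Option F
      | .zero => none
      | .some _ y _ => some y
    have hf : Function.Bijective f := by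
      constructor
      · rintro (_ | ⟨x, y, h⟩) (_ | ⟨x', y', h'⟩) hff
        · rfl
        · exact absurd hff (by simp [f])
        · exact absurd hff (by simp [f])
        · obtain rfl : y = y' := by simpa [f] using hff
          have e := (hEq x y).mp h.1
          have e' := (hEq x' y).mp h'.1
          obtain rfl : x = x' := hbij.1 (by linear_combination e' - e)
          rfl
      · rintro (_ | y)
        · exact ⟨.zero, rfl⟩
        · obtain ⟨x, hx⟩ := hbij.2 (y ^ 2 - b)
          exact ⟨.some x y (hNs x y (by linear_combination -hx)), rfl⟩
    rw [Nat.card_congr (Equiv.ofBijective f hf), Nat.card_eq_fintype_card, Fintype.card_option, hF]
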